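/- Let F be an iterated function system on ℝ^d with uniform contraction ratio λ ∈ (0,1) and uniform rotation U, with Garsia entropy h_F and splitting rate M_F. For n ∈ ℕ let μ_n be the law of ∑_{j=0}^{n−1} λ^j U^j X_j, where X_0, X_1, … are the i.i.d. digit random variables of F. Then for every M > M_F there exists c > 0 such that for all n ∈ ℕ: H(μ_n * n_1) − H(μ_n * n_{M^{−2n}}) < (d·log M − h_F)·n + c. -/

import Mathlib

open MeasureTheory Real

/-- An iterated function system on `ℝ^d` with uniform contraction ratio and uniform rotation:
maps `S_i (x) = λ U x + a_i` with weights `p_i > 0`. -/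
structure UIFS (d : ℕ) where
  m : ℕ
  hm : 0 < m
  lam : ℝ
  hlam : lam ∈ Set.Ioo (0 : ℝ) 1
  U : EuclideanSpace ℝ (Fin d) ≃ₗᵢ[ℝ] EuclideanSpace ℝ (Fin d)
  a : Fin m → EuclideanSpace ℝ (Fin d)
  p : Fin m → ℝ
  hp : ∀ i, 0 < p i
  hsum : ∑ i, p i = 1

namespace UIFS

variable {d : ℕ} (F : UIFS d)

/-- The map `S_i : x ↦ λ U x + a_i`. -/
noncomputable def S (i : Fin F.m) (x : EuclideanSpace ℝ (Fin d)) : EuclideanSpace ℝ (Fin d) :=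
  F.lam • F.U x + F.a i

/-- `S_{j 0} ∘ ⋯ ∘ S_{j (k-1)} (0) = ∑_t λ^t U^t a_{j t}`. -/
noncomputable def pt {k : ℕ} (j : Fin k → Fin F.m) : EuclideanSpace ℝ (Fin d) :=
  ∑ t : Fin k, F.lam ^ (t : ℕ) • (F.U ^ (t : ℕ)) (F.a (j t))

/-- The `k`-step support `V_{F,k}`. -/
noncomputable def V (k : ℕ) : Set (EuclideanSpace ℝ (Fin d)) :=
  Set.range (fun j : Fin k → Fin F.m => F.pt j)

/-- The separation `Δ_{F,k}` of `F` after `k` steps. -/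
noncomputable def sep (k : ℕ) : ℝ :=
  sInf {e : ℝ | ∃ x ∈ F.V k, ∃ y ∈ F.V k, x ≠ y ∧ e = dist x y}

/-- The splitting rate `M_F = limsup_k Δ_{F,k}^{-1/k}` (as an extended real). -/
noncomputable def splittingRate : ENNReal :=
  Filter.limsup (fun k : ℕ => ENNReal.ofReal (F.sep k) ^ (-(1 : ℝ) / k)) Filter.atTop

/-- The probability that the `k`-step random point equals `x`. -/
noncomputable def weight (k : ℕ) (x : EuclideanSpace ℝ (Fin d)) : ℝ :=
  letI := Classical.decEq (EuclideanSpace ℝ (Fin d))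
  ∑ j : Fin k → Fin F.m, if F.pt j = x then ∏ t, F.p (j t) else 0

/-- The Shannon entropy `h_{F,k} = H(∑_{t<k} λ^t U^t X_t)`. -/
noncomputable def Hk (k : ℕ) : ℝ :=
  letI := Classical.decEq (EuclideanSpace ℝ (Fin d))
  ∑ x ∈ Finset.image (fun j : Fin k → Fin F.m => F.pt j) Finset.univ,
    Real.negMulLog (F.weight k x)

/-- The Garsia entropy `h_F = liminf_k h_{F,k}/k`. -/
noncomputable def garsiaEntropy : ℝ :=
  Filter.liminf (fun k : ℕ => F.Hk k / k) Filter.atTop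

end UIFS


/-- Density of the centered Gaussian on `ℝ^d` with covariance matrix `y • I`. -/
noncomputable def gaussD (d : ℕ) (y : ℝ) (x : EuclideanSpace ℝ (Fin d)) : ℝ :=
  (2 * Real.pi * y) ^ (-(d : ℝ) / 2) * Real.exp (-‖x‖ ^ 2 / (2 * y))

/-- The differential entropy `H(μ * n_y) = ∫ -f log f` where `f` is the density of `μ * n_y`. -/
noncomputable def entG (d : ℕ) (μ : Measure (EuclideanSpace ℝ (Fin d))) (y : ℝ) : ℝ :=
  ∫ x, Real.negMulLog (∫ z, gaussD d y (x - z) ∂μ)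

/-- The law `μ_n` of `∑_{j<n} λ^j U^j X_j`. -/
noncomputable def UIFS.lawn {d : ℕ} (F : UIFS d) (n : ℕ) : Measure (EuclideanSpace ℝ (Fin d)) :=
  ∑ j : Fin n → Fin F.m, ENNReal.ofReal (∏ t, F.p (j t)) • Measure.dirac (F.pt j)


namespace UIFS

variable {d : ℕ} (F : UIFS d)

/-- probability of a word -/
noncomputable def wp {k : ℕ} (j : Fin k → Fin F.m) : ℝ := ∏ t, F.p (j t)

lemma wp_pos {k : ℕ} (j : Fin k → Fin F.m) : 0 < F.wp j :=
  Finset.prod_pos fun _ _ => F.hp _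

lemma wp_sum (k : ℕ) : ∑ j : Fin k → Fin F.m, F.wp j = 1 := by
  unfold wp
  rw [← Fintype.piFinset_univ, Finset.sum_prod_piFinset (s := Finset.univ) (g := fun (_ : Fin k) i => F.p i)]
  simp [F.hsum]

/-- points -/
noncomputable def Vf (k : ℕ) : Finset (EuclideanSpace ℝ (Fin d)) :=
  letI := Classical.decEq (EuclideanSpace ℝ (Fin d))
  Finset.image (fun j : Fin k → Fin F.m => F.pt j) Finset.univ

lemma mem_Vf {k : ℕ} (j : Fin k → Fin F.m) : F.pt j ∈ F.Vf k := by
  classical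
  unfold Vf
  simp

lemma Vf_V {k : ℕ} {x} (h : x ∈ F.Vf k) : x ∈ F.V k := by
  classical
  unfold Vf at h
  simpa [V] using h

lemma fib (k : ℕ) (φ : EuclideanSpace ℝ (Fin d) → ℝ) :
    ∑ j : Fin k → Fin F.m, F.wp j * φ (F.pt j) = ∑ x ∈ F.Vf k, F.weight k x * φ x := by
  classical
  rw [← Finset.sum_fiberwise_of_maps_to (s := Finset.univ) (t := F.Vf k) (g := F.pt)
    (fun j _ => F.mem_Vf j)]
  refine Finset.sum_congr rfl fun x _ => ?_
  unfold weight
  rw [Finset.sum_mul, Finset.sum_filter]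
  refine Finset.sum_congr rfl fun j _ => ?_
  by_cases h : F.pt j = x
  · simp [h, wp]
  · simp [h]

lemma wp_le_weight {k : ℕ} (j : Fin k → Fin F.m) : F.wp j ≤ F.weight k (F.pt j) := by
  let := Classical.decEq (EuclideanSpace ℝ (Fin d))
  unfold weight
  have := Finset.single_le_sum (f := fun i : Fin k → Fin F.m =>
    if F.pt i = F.pt j then ∏ t, F.p (i t) else 0) (s := Finset.univ) (fun i _ => by
      split_ifs
      · exact (F.wp_pos i).le
      · exact le_rfl) (Finset.mem_univ j)
  simp only [if_true] at this
  exact this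

lemma weight_pos {k : ℕ} (j : Fin k → Fin F.m) : 0 < F.weight k (F.pt j) :=
  (F.wp_pos j).trans_le (F.wp_le_weight j)

lemma weight_pos' {k : ℕ} {x} (h : x ∈ F.Vf k) : 0 < F.weight k x := by
  obtain ⟨j, rfl⟩ := F.Vf_V h
  exact F.weight_pos j

lemma weight_sum (k : ℕ) : ∑ x ∈ F.Vf k, F.weight k x = 1 := by
  have := F.fib k (fun _ => 1)
  simp only [mul_one] at this
  rw [← this, wp_sum]

lemma weight_le_one {k : ℕ} {x} (h : x ∈ F.Vf k) : F.weight k x ≤ 1 := by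
  rw [← F.weight_sum k]
  exact Finset.single_le_sum (f := F.weight k) (fun y hy => (F.weight_pos' hy).le) h

lemma Hk_eq' (k : ℕ) : F.Hk k = ∑ x ∈ F.Vf k, F.weight k x * (- Real.log (F.weight k x)) := by
  unfold Hk Vf
  refine Finset.sum_congr rfl fun x _ => ?_
  simp [Real.negMulLog]

lemma Hk_eq (k : ℕ) : F.Hk k = ∑ j : Fin k → Fin F.m, F.wp j * (- Real.log (F.weight k (F.pt j))) := by
  rw [Hk_eq', ← F.fib k (fun x => - Real.log (F.weight k x))]

lemma Hk_nonneg (k : ℕ) : 0 ≤ F.Hk k := by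
  rw [Hk_eq']
  refine Finset.sum_nonneg fun x hx => mul_nonneg (F.weight_pos' hx).le ?_
  have := Real.log_nonpos (F.weight_pos' hx).le (F.weight_le_one hx)
  linarith

lemma pt_append {a b : ℕ} (i : Fin a → Fin F.m) (j : Fin b → Fin F.m) :
    F.pt (Fin.append i j) = F.pt i + F.lam ^ a • (F.U ^ a) (F.pt j) := by
  unfold pt
  rw [Fin.sum_univ_add]
  simp only [Fin.append_left, Fin.append_right, Fin.val_castAdd, Fin.val_natAdd]
  congr 1
  rw [map_sum, Finset.smul_sum]
  refine Finset.sum_congr rfl fun t _ => ?_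
  rw [map_smul, smul_smul, pow_add, pow_add]
  rfl

lemma wp_append {a b : ℕ} (i : Fin a → Fin F.m) (j : Fin b → Fin F.m) :
    F.wp (Fin.append i j) = F.wp i * F.wp j := by
  unfold wp
  rw [Fin.prod_univ_add]
  simp

lemma weight_eq {k : ℕ} (x) :
    F.weight k x = letI := Classical.decEq (EuclideanSpace ℝ (Fin d))
      ∑ j : Fin k → Fin F.m, if F.pt j = x then F.wp j else 0 := rfl

lemma appE {α : Type*} {a b : ℕ} (q : (Fin a → α) × (Fin b → α)) :
    Fin.appendEquiv a b q = Fin.append q.1 q.2 := rfl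

lemma weight_append {a b : ℕ} (i : Fin a → Fin F.m) (j : Fin b → Fin F.m) :
    F.weight a (F.pt i) * F.weight b (F.pt j) ≤ F.weight (a + b) (F.pt (Fin.append i j)) := by
  classical
  rw [weight_eq, weight_eq, weight_eq]
  rw [Finset.sum_mul_sum, ← Finset.sum_product', Finset.univ_product_univ,
    ← (Fin.appendEquiv (α := Fin F.m) a b).sum_comp]
  refine Finset.sum_le_sum fun q _ => ?_
  rw [appE, wp_append, pt_append, pt_append]
  by_cases h1 : F.pt q.1 = F.pt i <;> by_cases h2 : F.pt q.2 = F.pt j <;>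
    simp only [h1, h2, if_true, if_false, mul_zero, zero_mul] <;> 
    first
    | exact le_rfl
    | (split_ifs
       · exact (mul_pos (F.wp_pos _) (F.wp_pos _)).le
       · exact le_rfl)

lemma Hk_sub : Subadditive F.Hk := by
  intro a b
  rw [Hk_eq, ← (Fin.appendEquiv (α := Fin F.m) a b).sum_comp]
  have : F.Hk a + F.Hk b = ∑ q : (Fin a → Fin F.m) × (Fin b → Fin F.m),
      F.wp q.1 * F.wp q.2 * (- Real.log (F.weight a (F.pt q.1)) + - Real.log (F.weight b (F.pt q.2))) := by
    rw [Fintype.sum_prod_type]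
    simp only [mul_add, Finset.sum_add_distrib]
    congr 1
    · rw [Hk_eq]
      refine Finset.sum_congr rfl fun i _ => ?_
      rw [← Finset.sum_mul, ← Finset.mul_sum, wp_sum, mul_one]
    · rw [Finset.sum_comm, Hk_eq]
      refine Finset.sum_congr rfl fun i _ => ?_
      rw [← Finset.sum_mul, ← Finset.sum_mul, wp_sum, one_mul]
  rw [this]
  refine Finset.sum_le_sum fun q _ => ?_
  rw [appE, wp_append]
  refine mul_le_mul_of_nonneg_left ?_ (mul_pos (F.wp_pos _) (F.wp_pos _)).le
  have h := Real.log_le_log (mul_pos (F.weight_pos q.1) (F.weight_pos q.2)) (F.weight_append q.1 q.2)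
  rw [Real.log_mul (F.weight_pos q.1).ne' (F.weight_pos q.2).ne'] at h
  linarith

lemma garsia_le (n : ℕ) : F.garsiaEntropy * n ≤ F.Hk n := by
  rcases Nat.eq_zero_or_pos n with rfl | hn
  · simpa using F.Hk_nonneg 0
  have hb : BddBelow (Set.range fun n : ℕ => F.Hk n / n) := by
    refine ⟨0, ?_⟩
    rintro _ ⟨n, rfl⟩
    exact div_nonneg (F.Hk_nonneg n) n.cast_nonneg
  have h1 := F.Hk_sub.lim_le_div hb hn.ne'
  rw [← (F.Hk_sub.tendsto_lim hb).liminf_eq] at h1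
  have : (0:ℝ) < n := by exact_mod_cast hn
  rwa [le_div_iff₀ this] at h1

/-- support radius -/
noncomputable def R : ℝ := (∑ i, ‖F.a i‖) * (1 - F.lam)⁻¹

lemma R_nonneg : 0 ≤ F.R := by
  have := F.hlam.2
  exact mul_nonneg (Finset.sum_nonneg fun _ _ => norm_nonneg _) (inv_nonneg.2 (by linarith))

lemma norm_pt {k : ℕ} (j : Fin k → Fin F.m) : ‖F.pt j‖ ≤ F.R := by
  have h0 := F.hlam.1
  have h1 := F.hlam.2
  calc ‖F.pt j‖ ≤ ∑ t : Fin k, F.lam ^ (t : ℕ) * (∑ i, ‖F.a i‖) := by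
        refine norm_sum_le_of_le _ fun t _ => ?_
        rw [norm_smul, LinearIsometryEquiv.norm_map, norm_pow, Real.norm_of_nonneg h0.le]
        refine mul_le_mul_of_nonneg_left ?_ (by positivity)
        exact Finset.single_le_sum (f := fun i => ‖F.a i‖) (fun _ _ => norm_nonneg _) (Finset.mem_univ _)
    _ = (∑ t ∈ Finset.range k, F.lam ^ t) * (∑ i, ‖F.a i‖) := by
        rw [← Finset.sum_mul, Finset.sum_range]
    _ ≤ (1 - F.lam)⁻¹ * (∑ i, ‖F.a i‖) := by
        refine mul_le_mul_of_nonneg_right ?_ (Finset.sum_nonneg fun _ _ => norm_nonneg _)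
        rw [← tsum_geometric_of_lt_one h0.le h1]
        exact (summable_geometric_of_lt_one h0.le h1).sum_le_tsum _ (fun _ _ => by positivity)
    _ = F.R := by rw [R, mul_comm]

lemma sep_lt {M : ℝ} (hM : F.splittingRate < ENNReal.ofReal M) :
    0 < M ∧ ∃ n0 : ℕ, ∀ n ≥ n0, ∀ x ∈ F.Vf n, ∀ y ∈ F.Vf n, x ≠ y → (M ^ n)⁻¹ ≤ dist x y := by
  have hM0 : 0 < M := by
    by_contra h
    rw [ENNReal.ofReal_of_nonpos (not_lt.1 h)] at hM
    exact not_lt_bot hM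
  refine ⟨hM0, ?_⟩
  have h := Filter.eventually_lt_of_limsup_lt hM
  obtain ⟨n0, hn0⟩ := Filter.eventually_atTop.1 h
  refine ⟨max n0 1, fun n hn x hx y hy hxy => ?_⟩
  have h1 := hn0 n (le_of_max_le_left hn)
  have hn1 : 0 < n := (le_of_max_le_right hn)
  have hn' : (0:ℝ) < n := by exact_mod_cast hn1
  have hle : F.sep n ≤ dist x y := by
    refine csInf_le ⟨0, ?_⟩ ⟨x, F.Vf_V hx, y, F.Vf_V hy, hxy, rfl⟩
    rintro _ ⟨_, _, _, _, _, rfl⟩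
    exact dist_nonneg
  refine le_trans ?_ hle
  have hneg : -(1:ℝ) / n < 0 := div_neg_of_neg_of_pos (by norm_num) hn'
  have hs : 0 < F.sep n := by
    by_contra h
    rw [ENNReal.ofReal_of_nonpos (not_lt.1 h), ENNReal.zero_rpow_of_neg hneg] at h1
    exact not_top_lt h1
  rw [ENNReal.ofReal_rpow_of_pos hs, ENNReal.ofReal_lt_ofReal_iff hM0] at h1
  have h2 : ((F.sep n) ^ (-(1:ℝ) / n)) ^ n ≤ M ^ n := pow_le_pow_left₀ (by positivity) h1.le n
  rw [← Real.rpow_natCast, ← Real.rpow_mul hs.le, div_mul_cancel₀ _ hn'.ne', Real.rpow_neg_one] at h2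
  exact inv_le_of_inv_le₀ hs h2

end UIFS

lemma gb_pos {d : ℕ} {y : ℝ} (hy : 0 < y) (x : EuclideanSpace ℝ (Fin d)) : 0 < gaussD d y x := by
  unfold gaussD
  have := Real.pi_pos
  positivity

lemma expb_int (d : ℕ) {b : ℝ} (hb : 0 < b) :
    Integrable (fun x : EuclideanSpace ℝ (Fin d) => Real.exp (-b * ‖x‖ ^ 2)) := by
  by_contra h
  have h1 := GaussianFourier.integral_rexp_neg_mul_sq_norm (V := EuclideanSpace ℝ (Fin d)) hb
  rw [integral_undef h] at h1
  have : 0 < (π / b) ^ ((Module.finrank ℝ (EuclideanSpace ℝ (Fin d)) : ℝ) / 2) := by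
    have := Real.pi_pos
    positivity
  linarith

lemma gaussD_eq (d : ℕ) (y : ℝ) : gaussD d y = fun x =>
    (2 * Real.pi * y) ^ (-(d : ℝ) / 2) * Real.exp (-(1 / (2 * y)) * ‖x‖ ^ 2) := by
  funext x
  unfold gaussD
  congr 2
  ring

lemma gaussD_int (d : ℕ) {y : ℝ} (hy : 0 < y) : Integrable (gaussD d y) := by
  rw [gaussD_eq]
  exact (expb_int d (by positivity)).const_mul _

lemma gaussD_one (d : ℕ) {y : ℝ} (hy : 0 < y) : ∫ x, gaussD d y x = 1 := by
  rw [gaussD_eq, integral_const_mul, GaussianFourier.integral_rexp_neg_mul_sq_norm (by positivity)]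
  have hp := Real.pi_pos
  have : π / (1 / (2 * y)) = 2 * π * y := by field_simp
  rw [this, finrank_euclideanSpace_fin, ← Real.rpow_add (by positivity)]
  have : -(d : ℝ) / 2 + (d : ℝ) / 2 = 0 := by ring
  rw [this, Real.rpow_zero]

lemma gaussD_cont (d : ℕ) (y : ℝ) : Continuous (gaussD d y) := by
  rw [gaussD_eq]
  fun_prop

lemma gaussD_sq (d : ℕ) {r : ℝ} (hr : 0 < r) (x) :
    gaussD d (r ^ 2) x = (2 * π) ^ (-(d : ℝ) / 2) * (r ^ d)⁻¹ * Real.exp (-‖x‖ ^ 2 / (2 * r ^ 2)) := by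
  unfold gaussD
  have hp := Real.pi_pos
  rw [Real.mul_rpow (by positivity) (by positivity)]
  congr 2
  rw [← Real.rpow_natCast r 2, ← Real.rpow_mul hr.le, ← Real.rpow_natCast, ← Real.rpow_neg hr.le]
  congr 1
  push_cast
  ring

/-- packing constant -/
noncomputable def K0 (d : ℕ) : ℝ :=
  (2 * π) ^ (-(d : ℝ) / 2) * (Real.exp 1 * (4 * π) ^ ((d : ℝ) / 2) *
    ((1 / 2 : ℝ) ^ d * (volume : Measure (EuclideanSpace ℝ (Fin d))).real (Metric.ball 0 1))⁻¹)

lemma volball_pos (d : ℕ) :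
    0 < (volume : Measure (EuclideanSpace ℝ (Fin d))).real (Metric.ball 0 1) :=
  ENNReal.toReal_pos (Metric.measure_ball_pos _ _ one_pos).ne' measure_ball_lt_top.ne

lemma K0_pos (d : ℕ) : 0 < K0 d := by
  unfold K0
  have hp := Real.pi_pos
  have := volball_pos d
  positivity

lemma packing (d : ℕ) {r : ℝ} (hr : 0 < r) (s : Finset (EuclideanSpace ℝ (Fin d)))
    (hs : ∀ x ∈ s, ∀ y ∈ s, x ≠ y → r ≤ dist x y) (x : EuclideanSpace ℝ (Fin d)) :
    ∑ v ∈ s, gaussD d (r ^ 2) (x - v) ≤ K0 d * (r ^ d)⁻¹ := by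
  have hp := Real.pi_pos
  have hv := volball_pos d
  set b : ℝ := 1 / (4 * r ^ 2) with hb
  have hb0 : 0 < b := by positivity
  set φ : EuclideanSpace ℝ (Fin d) → ℝ := fun z => Real.exp (-b * ‖x - z‖ ^ 2) with hφ
  have hφi : Integrable φ := (expb_int d hb0).comp_sub_left x
  have hφt : ∫ z, φ z = (4 * π) ^ ((d : ℝ) / 2) * r ^ d := by
    rw [hφ, integral_sub_left_eq_self (fun z => Real.exp (-b * ‖z‖ ^ 2)) volume x,
      GaussianFourier.integral_rexp_neg_mul_sq_norm hb0, finrank_euclideanSpace_fin]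
    have : π / b = (4 * π) * r ^ 2 := by rw [hb]; field_simp
    rw [this, Real.mul_rpow (by positivity) (by positivity)]
    congr 1
    rw [← Real.rpow_natCast r 2, ← Real.rpow_mul hr.le, ← Real.rpow_natCast]
    congr 1
    push_cast
    ring
  set B : ℝ := (r / 2) ^ d * (volume : Measure (EuclideanSpace ℝ (Fin d))).real (Metric.ball 0 1)
    with hB
  have hB0 : 0 < B := by positivity
  have hvol : ∀ v : EuclideanSpace ℝ (Fin d), volume.real (Metric.ball v (r / 2)) = B := by
    intro v
    rw [Measure.real, Measure.addHaar_ball_of_pos _ _ (by positivity), ENNReal.toReal_mul,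
      ENNReal.toReal_ofReal (by positivity), finrank_euclideanSpace_fin]
    rfl
  have hpt : ∀ v : EuclideanSpace ℝ (Fin d), ∀ z ∈ Metric.ball v (r / 2),
      Real.exp (-‖x - v‖ ^ 2 / (2 * r ^ 2)) ≤ Real.exp 1 * φ z := by
    intro v z hz
    rw [hφ, ← Real.exp_add, Real.exp_le_exp]
    have h1 : ‖x - z‖ ≤ ‖x - v‖ + r / 2 := by
      have : ‖v - z‖ < r / 2 := by rwa [← dist_eq_norm, dist_comm]
      calc ‖x - z‖ = ‖(x - v) + (v - z)‖ := by congr 1; abel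
        _ ≤ ‖x - v‖ + ‖v - z‖ := norm_add_le _ _
        _ ≤ _ := by linarith
    have h2 : ‖x - z‖ ^ 2 ≤ 2 * ‖x - v‖ ^ 2 + 4 * r ^ 2 := by
      nlinarith [norm_nonneg (x - z), norm_nonneg (x - v), sq_nonneg (‖x - v‖ - r / 2)]
    rw [hb]
    have h3 : ‖x - z‖ ^ 2 / (4 * r ^ 2) ≤ (2 * ‖x - v‖ ^ 2 + 4 * r ^ 2) / (4 * r ^ 2) := by gcongr
    have h4 : (2 * ‖x - v‖ ^ 2 + 4 * r ^ 2) / (4 * r ^ 2) = ‖x - v‖ ^ 2 / (2 * r ^ 2) + 1 := by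
      field_simp
      ring
    have h5 : -(1 / (4 * r ^ 2)) * ‖x - z‖ ^ 2 = - (‖x - z‖ ^ 2 / (4 * r ^ 2)) := by ring
    rw [h5, neg_div]
    linarith
  have hone : ∀ v : EuclideanSpace ℝ (Fin d),
      B * Real.exp (-‖x - v‖ ^ 2 / (2 * r ^ 2)) ≤ ∫ z in Metric.ball v (r / 2), Real.exp 1 * φ z := by
    intro v
    have h := setIntegral_mono_on (μ := volume) (s := Metric.ball v (r / 2))
      (f := fun _ => Real.exp (-‖x - v‖ ^ 2 / (2 * r ^ 2))) (g := fun z => Real.exp 1 * φ z)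
      (integrableOn_const measure_ball_lt_top.ne) (hφi.const_mul _).integrableOn
      measurableSet_ball (hpt v)
    rwa [setIntegral_const, hvol, smul_eq_mul] at h
  have hsum : B * ∑ v ∈ s, Real.exp (-‖x - v‖ ^ 2 / (2 * r ^ 2)) ≤
      Real.exp 1 * ((4 * π) ^ ((d : ℝ) / 2) * r ^ d) := by
    rw [Finset.mul_sum]
    refine (Finset.sum_le_sum fun v _ => hone v).trans ?_
    rw [← integral_biUnion_finset s (fun _ _ => measurableSet_ball) ?_
      (fun _ _ => (hφi.const_mul _).integrableOn)]
    · rw [← hφt, ← integral_const_mul]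
      refine setIntegral_le_integral (hφi.const_mul _) (Filter.Eventually.of_forall fun z => ?_)
      simp only [hφ, Pi.zero_apply]
      positivity
    · intro u hu v hv huv
      refine Metric.ball_disjoint_ball ?_
      have := hs u hu v hv huv
      linarith
  have : ∑ v ∈ s, Real.exp (-‖x - v‖ ^ 2 / (2 * r ^ 2)) ≤
      B⁻¹ * (Real.exp 1 * ((4 * π) ^ ((d : ℝ) / 2) * r ^ d)) := by
    rwa [le_inv_mul_iff₀ hB0]
  calc ∑ v ∈ s, gaussD d (r ^ 2) (x - v)
      = (2 * π) ^ (-(d : ℝ) / 2) * (r ^ d)⁻¹ * ∑ v ∈ s, Real.exp (-‖x - v‖ ^ 2 / (2 * r ^ 2)) := by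
        rw [Finset.mul_sum]
        exact Finset.sum_congr rfl fun v _ => gaussD_sq d hr _
    _ ≤ (2 * π) ^ (-(d : ℝ) / 2) * (r ^ d)⁻¹ *
          (B⁻¹ * (Real.exp 1 * ((4 * π) ^ ((d : ℝ) / 2) * r ^ d))) := by gcongr
    _ = K0 d * (r ^ d)⁻¹ := by
        have h2 : (r / 2) ^ d = r ^ d * (1 / 2) ^ d := by rw [← mul_pow]; congr 1; ring
        rw [hB, K0, h2]
        have h3 : (0:ℝ) < (1 / 2) ^ d := by positivity
        generalize ((1:ℝ) / 2) ^ d = q at h3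
        have h4 : (0:ℝ) < r ^ d := by positivity
        generalize r ^ d = u at h4
        field_simp

lemma abs_negMulLog_le {t : ℝ} (ht : 0 ≤ t) : |Real.negMulLog t| ≤ 2 * √t + t ^ 2 := by
  rcases ht.eq_or_lt with rfl | h
  · simp
  have hs : 0 < √t := Real.sqrt_pos.2 h
  have h1 : Real.log (√t)⁻¹ ≤ (√t)⁻¹ - 1 := Real.log_le_sub_one_of_pos (by positivity)
  have h2 : Real.log t ≤ t - 1 := Real.log_le_sub_one_of_pos h
  rw [Real.log_inv, Real.log_sqrt ht] at h1
  have h3 : t * (√t)⁻¹ = √t := by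
    nth_rewrite 1 [← Real.mul_self_sqrt ht]
    field_simp
  rw [Real.negMulLog, abs_le]
  constructor
  · nlinarith
  · have : t * (- Real.log t) ≤ t * (2 * (√t)⁻¹) := by
      refine mul_le_mul_of_nonneg_left ?_ ht
      linarith
    nlinarith [sq_nonneg t]

namespace UIFS

variable {d : ℕ} (F : UIFS d)

/-- density of the smoothed law -/
noncomputable def dens (n : ℕ) (y : ℝ) (x : EuclideanSpace ℝ (Fin d)) : ℝ :=
  ∑ j : Fin n → Fin F.m, F.wp j * gaussD d y (x - F.pt j)

lemma dens_eq (n : ℕ) (y : ℝ) (x : EuclideanSpace ℝ (Fin d)) :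
    ∫ z, gaussD d y (x - z) ∂(F.lawn n) = F.dens n y x := by
  unfold lawn dens
  rw [integral_finsetSum_measure]
  · refine Finset.sum_congr rfl fun j _ => ?_
    rw [integral_smul_measure, integral_dirac, smul_eq_mul]
    congr 1
    exact ENNReal.toReal_ofReal (F.wp_pos j).le
  · intro j _
    exact (integrable_dirac enorm_lt_top).smul_measure ENNReal.ofReal_ne_top

lemma entG_eq (n : ℕ) (y : ℝ) :
    entG d (F.lawn n) y = ∫ x, Real.negMulLog (F.dens n y x) := by
  unfold entG
  simp only [dens_eq]

lemma dens_pos (n : ℕ) {y : ℝ} (hy : 0 < y) (x) : 0 < F.dens n y x := by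
  have : Nonempty (Fin F.m) := ⟨⟨0, F.hm⟩⟩
  exact Finset.sum_pos (fun j _ => mul_pos (F.wp_pos j) (gb_pos hy _)) Finset.univ_nonempty

/-- prefactor -/
noncomputable def Bc (y : ℝ) : ℝ := (2 * π * y) ^ (-(d : ℝ) / 2) * Real.exp (F.R ^ 2 / (2 * y))

lemma dens_le (n : ℕ) {y : ℝ} (hy : 0 < y) (x) :
    F.dens n y x ≤ F.Bc y * Real.exp (-(1 / (4 * y)) * ‖x‖ ^ 2) := by
  have hp := Real.pi_pos
  have h : ∀ j : Fin n → Fin F.m, gaussD d y (x - F.pt j) ≤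
      F.Bc y * Real.exp (-(1 / (4 * y)) * ‖x‖ ^ 2) := by
    intro j
    unfold gaussD Bc
    rw [mul_assoc (_ ^ _), ← Real.exp_add]
    refine mul_le_mul_of_nonneg_left (Real.exp_le_exp.2 ?_) (by positivity)
    have h1 : ‖x‖ ≤ ‖x - F.pt j‖ + F.R := by
      have := norm_add_le (x - F.pt j) (F.pt j)
      rw [sub_add_cancel] at this
      linarith [F.norm_pt j]
    have h2 : ‖x‖ ^ 2 ≤ 2 * ‖x - F.pt j‖ ^ 2 + 2 * F.R ^ 2 := by
      nlinarith [norm_nonneg x, F.R_nonneg, norm_nonneg (x - F.pt j),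
        sq_nonneg (‖x - F.pt j‖ - F.R)]
    have h3 : ‖x‖ ^ 2 / (4 * y) ≤ (2 * ‖x - F.pt j‖ ^ 2 + 2 * F.R ^ 2) / (4 * y) := by gcongr
    have h4 : (2 * ‖x - F.pt j‖ ^ 2 + 2 * F.R ^ 2) / (4 * y) =
        ‖x - F.pt j‖ ^ 2 / (2 * y) + F.R ^ 2 / (2 * y) := by
      field_simp
      ring
    have h5 : -(1 / (4 * y)) * ‖x‖ ^ 2 = - (‖x‖ ^ 2 / (4 * y)) := by ring
    rw [h5, neg_div]
    linarith
  unfold dens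
  calc _ ≤ ∑ j : Fin n → Fin F.m, F.wp j * (F.Bc y * Real.exp (-(1 / (4 * y)) * ‖x‖ ^ 2)) :=
        Finset.sum_le_sum fun j _ => mul_le_mul_of_nonneg_left (h j) (F.wp_pos j).le
    _ = _ := by rw [← Finset.sum_mul, wp_sum, one_mul]

/-- dominating function -/
noncomputable def dom (y : ℝ) (x : EuclideanSpace ℝ (Fin d)) : ℝ :=
  2 * (√(F.Bc y) * Real.exp (-(1 / (8 * y)) * ‖x‖ ^ 2)) +
    (F.Bc y) ^ 2 * Real.exp (-(1 / (2 * y)) * ‖x‖ ^ 2)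

lemma dom_int {y : ℝ} (hy : 0 < y) : Integrable (F.dom y) :=
  (((expb_int d (by positivity)).const_mul _).const_mul _).add
    ((expb_int d (by positivity)).const_mul _)

lemma nml_le (n : ℕ) {y : ℝ} (hy : 0 < y) (x) :
    |Real.negMulLog (F.dens n y x)| ≤ F.dom y x := by
  have h0 := (F.dens_pos n hy x).le
  have h1 := F.dens_le n hy x
  have hB : 0 ≤ F.Bc y := by
    have hp := Real.pi_pos
    unfold Bc
    positivity
  refine (abs_negMulLog_le h0).trans ?_
  unfold dom
  have e1 : √(F.Bc y) * Real.exp (-(1 / (8 * y)) * ‖x‖ ^ 2) =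
      √(F.Bc y * Real.exp (-(1 / (4 * y)) * ‖x‖ ^ 2)) := by
    rw [Real.sqrt_mul hB, ← Real.exp_half]
    congr 2
    field_simp
    ring
  have e2 : (F.Bc y) ^ 2 * Real.exp (-(1 / (2 * y)) * ‖x‖ ^ 2) =
      (F.Bc y * Real.exp (-(1 / (4 * y)) * ‖x‖ ^ 2)) ^ 2 := by
    rw [mul_pow, ← Real.exp_nat_mul]
    congr 2
    push_cast
    field_simp
    ring
  rw [e1, e2]
  gcongr

lemma dens_cont (n : ℕ) (y : ℝ) : Continuous (F.dens n y) := by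
  unfold dens
  have := gaussD_cont d y
  fun_prop

lemma nml_int (n : ℕ) {y : ℝ} (hy : 0 < y) :
    Integrable (fun x => Real.negMulLog (F.dens n y x)) := by
  refine (F.dom_int hy).mono' ?_ (Filter.Eventually.of_forall fun x => ?_)
  · exact (Real.continuous_negMulLog.comp (F.dens_cont n y)).aestronglyMeasurable
  · exact F.nml_le n hy x

lemma upper (n : ℕ) : entG d (F.lawn n) 1 ≤ ∫ x, F.dom 1 x := by
  rw [entG_eq]
  exact integral_mono (F.nml_int n one_pos) (F.dom_int one_pos)
    fun x => (le_abs_self _).trans (F.nml_le n one_pos x)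

lemma dens_int (n : ℕ) {y : ℝ} (hy : 0 < y) : Integrable (F.dens n y) :=
  integrable_finsetSum _ fun j _ => ((gaussD_int d hy).comp_sub_right (F.pt j)).const_mul _

lemma dens_one (n : ℕ) {y : ℝ} (hy : 0 < y) : ∫ x, F.dens n y x = 1 := by
  unfold dens
  rw [integral_finsetSum _ fun j _ => ((gaussD_int d hy).comp_sub_right (F.pt j)).const_mul _]
  simp only [integral_const_mul]
  simp only [integral_sub_right_eq_self (gaussD d y), gaussD_one d hy, mul_one, wp_sum]

lemma dens_fib (n : ℕ) (y : ℝ) (x) :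
    F.dens n y x = ∑ v ∈ F.Vf n, F.weight n v * gaussD d y (x - v) :=
  F.fib n (fun v => gaussD d y (x - v))

lemma pointwise (n : ℕ) {y K : ℝ} (hy : 0 < y) (hK : 0 < K)
    (h : ∀ x, ∑ v ∈ F.Vf n, gaussD d y (x - v) ≤ K) (x) :
    ∑ v ∈ F.Vf n, F.weight n v * (- Real.log (F.weight n v)) * gaussD d y (x - v)
      - Real.log K * F.dens n y x ≤ Real.negMulLog (F.dens n y x) := by
  set f := F.dens n y x with hf
  have hf0 : 0 < f := F.dens_pos n hy x
  have h1 : ∀ v ∈ F.Vf n, F.weight n v * gaussD d y (x - v) *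
      (Real.log f - Real.log (F.weight n v) - Real.log K) ≤
      gaussD d y (x - v) * (f / K) - F.weight n v * gaussD d y (x - v) := by
    intro v hv
    have hw := F.weight_pos' hv
    have hg := gb_pos hy (x - v)
    have h2 := Real.log_le_sub_one_of_pos (x := f / (F.weight n v * K)) (by positivity)
    rw [Real.log_div hf0.ne' (by positivity), Real.log_mul hw.ne' hK.ne'] at h2
    calc _ ≤ F.weight n v * gaussD d y (x - v) * (f / (F.weight n v * K) - 1) :=
          mul_le_mul_of_nonneg_left (by linarith) (by positivity)
      _ = _ := by field_simp
  have h3 := Finset.sum_le_sum h1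
  rw [Finset.sum_sub_distrib, ← Finset.sum_mul, ← dens_fib, ← hf] at h3
  have h4 : (∑ v ∈ F.Vf n, gaussD d y (x - v)) * (f / K) ≤ K * (f / K) :=
    mul_le_mul_of_nonneg_right (h x) (by positivity)
  rw [mul_div_cancel₀ _ hK.ne'] at h4
  have h5 : ∑ v ∈ F.Vf n, F.weight n v * gaussD d y (x - v) *
      (Real.log f - Real.log (F.weight n v) - Real.log K) =
      f * (Real.log f - Real.log K) +
      ∑ v ∈ F.Vf n, F.weight n v * (- Real.log (F.weight n v)) * gaussD d y (x - v) := by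
    conv_rhs => rw [hf, dens_fib, Finset.sum_mul, ← Finset.sum_add_distrib]
    refine Finset.sum_congr rfl fun v _ => ?_
    rw [← dens_fib, ← hf]
    ring
  rw [h5] at h3
  rw [Real.negMulLog]
  linarith

lemma lower (n : ℕ) {y K : ℝ} (hy : 0 < y) (hK : 0 < K)
    (h : ∀ x, ∑ v ∈ F.Vf n, gaussD d y (x - v) ≤ K) :
    F.Hk n - Real.log K ≤ entG d (F.lawn n) y := by
  have hi : ∀ v ∈ F.Vf n, Integrable (fun x => F.weight n v * (- Real.log (F.weight n v)) *
      gaussD d y (x - v)) := fun v _ => ((gaussD_int d hy).comp_sub_right v).const_mul _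
  have h1 := integral_mono ((integrable_finsetSum _ hi).sub ((F.dens_int n hy).const_mul _))
    (F.nml_int n hy) (F.pointwise n hy hK h)
  rw [entG_eq]
  refine le_trans (le_of_eq ?_) h1
  rw [integral_sub' (integrable_finsetSum _ hi) ((F.dens_int n hy).const_mul _),
    integral_finsetSum _ hi, integral_const_mul, dens_one F n hy, mul_one]
  simp only [integral_const_mul]
  simp only [integral_sub_right_eq_self (gaussD d y), gaussD_one d hy, mul_one, Hk_eq']

end UIFS

theorem statement15 {d : ℕ} (F : UIFS d) (M : ℝ)
    (hM : F.splittingRate < ENNReal.ofReal M) :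
    ∃ c : ℝ, 0 < c ∧ ∀ n : ℕ,
      entG d (F.lawn n) 1 - entG d (F.lawn n) ((M ^ (2 * n))⁻¹) <
        ((d : ℝ) * Real.log M - F.garsiaEntropy) * n + c := by
  obtain ⟨hM0, n0, hn0⟩ := F.sep_lt hM
  set D : ℕ → ℝ := fun n => entG d (F.lawn n) 1 - entG d (F.lawn n) ((M ^ (2 * n))⁻¹) -
    ((d : ℝ) * Real.log M - F.garsiaEntropy) * n with hD
  set C : ℝ := (∫ x, F.dom 1 x) + Real.log (K0 d) with hC
  have hlarge : ∀ n ≥ n0, D n ≤ C := by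
    intro n hn
    have hr : 0 < (M ^ n)⁻¹ := by positivity
    have hy : (M ^ (2 * n))⁻¹ = ((M ^ n)⁻¹) ^ 2 := by rw [inv_pow, ← pow_mul, mul_comm]
    have hK := K0_pos d
    have hlow := F.lower n (y := ((M ^ n)⁻¹) ^ 2) (K := K0 d * ((((M ^ n)⁻¹) ^ d))⁻¹)
      (by positivity) (by positivity) (packing d hr (F.Vf n) (hn0 n hn))
    have hl : Real.log (K0 d * ((((M ^ n)⁻¹) ^ d))⁻¹) = Real.log (K0 d) + d * (n * Real.log M) := by
      rw [Real.log_mul hK.ne' (by positivity), inv_pow, inv_inv, Real.log_pow, Real.log_pow]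
    rw [hl] at hlow
    have hup := F.upper n
    have hg := F.garsia_le n
    simp only [hD, hy, hC]
    linarith
  refine ⟨|C| + ∑ n ∈ Finset.range n0, |D n| + 1, by positivity, fun n => ?_⟩
  have hs : 0 ≤ ∑ n ∈ Finset.range n0, |D n| := Finset.sum_nonneg fun _ _ => abs_nonneg _
  have key : D n ≤ |C| + ∑ n ∈ Finset.range n0, |D n| := by
    rcases le_or_gt n0 n with h | h
    · linarith [hlarge n h, le_abs_self C]
    · have := Finset.single_le_sum (f := fun n => |D n|) (fun _ _ => abs_nonneg _)
        (Finset.mem_range.2 h)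
      have h2 : |D n| ≤ ∑ n ∈ Finset.range n0, |D n| := this
      linarith [le_abs_self (D n), abs_nonneg C]
  have : D n = entG d (F.lawn n) 1 - entG d (F.lawn n) ((M ^ (2 * n))⁻¹) -
    ((d : ℝ) * Real.log M - F.garsiaEntropy) * n := rfl
  linarith
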